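/- arXiv:2011.04112 — 3 statements merged into one kernel-verified Lean document; each statement's English description precedes it below -/
import Mathlib

section
/- Let α : ℝ → ℝ be a locally Lipschitz extended class-K function (i.e., α is strictly increasing and α(0) = 0). Let T ∈ (0, ∞], and let v : [0, T) → ℝ be a differentiable function such that v(0) ≥ 0 and v'(t) ≥ -α(v(t)) for all t ∈ [0, T). Then v(t) ≥ 0 for all t ∈ [0, T). -/
/-!
Where `v` is negative, `-α (v t)` is nonnegative, so `v` cannot decrease there. To get a strict
sign, perturb `v` to `t ↦ v t + ε * (1 + (t - a))`: if this vanishes at `t`, then `v t < 0`, so its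
slope there is at least `ε > 0` and it cannot become negative. Letting `ε → 0` gives `0 ≤ v`.
-/

open Set Filter Topology

theorem image_le_of_deriv_right_le_deriv_boundary_of_lt {f f' B B' : ℝ → ℝ} {a b : ℝ}
    (hf : ContinuousOn f (Icc a b)) (hf' : ∀ x ∈ Ico a b, HasDerivWithinAt f (f' x) (Ici x) x)
    (ha : f a ≤ B a) (hB : ContinuousOn B (Icc a b))
    (hB' : ∀ x ∈ Ico a b, HasDerivWithinAt B (B' x) (Ici x) x)
    (bound : ∀ x ∈ Ico a b, B x < f x → f' x ≤ B' x) : ∀ ⦃x⦄, x ∈ Icc a b → f x ≤ B x := by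
  intro x hx
  have le_barrier (ε : ℝ) (hε : 0 < ε) : f x ≤ B x + ε * (1 + (x - a)) := by
    refine image_le_of_deriv_right_lt_deriv_boundary' (B := fun y ↦ B y + ε * (1 + (y - a)))
      (B' := fun y ↦ B' y + ε) hf hf' ?_ (by fun_prop) (fun y hy ↦ ?_) (fun y hy touch ↦ ?_) hx
    · linarith
    · simpa only [id_eq, mul_one] using
        (hB' y hy).fun_add ((((hasDerivWithinAt_id y _).sub_const a).const_add 1).const_mul ε)
    · have gap_pos : 0 < ε * (1 + (y - a)) := mul_pos hε (by linarith [hy.1])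
      have slope_le : f' y ≤ B' y := bound y hy (by linarith)
      linarith
  have barrier_tendsto : Tendsto (fun ε ↦ B x + ε * (1 + (x - a))) (𝓝[>] 0) (𝓝 (B x)) :=
    (Continuous.tendsto' (by fun_prop) 0 (B x) (by simp)).mono_left nhdsWithin_le_nhds
  exact ge_of_tendsto barrier_tendsto (eventually_mem_nhdsWithin.mono le_barrier)

theorem ordConnected_setOf_nonneg_and_coe_lt (T : EReal) :
    OrdConnected {s : ℝ | 0 ≤ s ∧ (s : EReal) < T} :=
  ordConnected_Ici.inter (ordConnected_Iio.preimage_mono EReal.coe_strictMono.monotone)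

theorem scalar_comparison_nonneg_general
    {α : ℝ → ℝ} (hα : ∀ y < 0, α y ≤ 0) {S : Set ℝ} (hS : S.OrdConnected) {a : ℝ} (ha : a ∈ S)
    {v v' : ℝ → ℝ} (hderiv : ∀ t ∈ S, HasDerivWithinAt v (v' t) S t)
    (hineq : ∀ t ∈ S, v' t ≥ -α (v t)) (hva : 0 ≤ v a) :
    ∀ t ∈ S, a ≤ t → 0 ≤ v t := by
  intro t ht hat
  have Icc_subset : Icc a t ⊆ S := hS.out ha ht
  have deriv_Icc : ∀ s ∈ Icc a t, HasDerivWithinAt v (v' s) (Icc a t) s :=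
    fun s hs ↦ (hderiv s (Icc_subset hs)).mono Icc_subset
  have deriv_right : ∀ s ∈ Ico a t, HasDerivWithinAt v (v' s) (Ici s) s :=
    fun s hs ↦ (deriv_Icc s (Ico_subset_Icc_self hs)).mono_of_mem_nhdsWithin
      (Icc_mem_nhdsGE_of_mem hs)
  have deriv_nonneg : ∀ s ∈ Ico a t, v s < 0 → 0 ≤ v' s :=
    fun s hs hvs ↦ (neg_nonneg.mpr (hα (v s) hvs)).trans
      (hineq s (Icc_subset (Ico_subset_Icc_self hs)))
  exact image_le_of_deriv_right_le_deriv_boundary_of_lt continuousOn_const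
    (fun s _ ↦ hasDerivWithinAt_const s _ 0) hva
    (fun s hs ↦ (deriv_Icc s hs).continuousWithinAt) deriv_right deriv_nonneg
    (right_mem_Icc.mpr hat)

/-- Comparison-lemma argument underlying Lemma 1: if `α` is a locally Lipschitz
extended class-K function (strictly increasing with `α 0 = 0`), `T ∈ (0, ∞]`,
and `v : [0, T) → ℝ` is differentiable with `v 0 ≥ 0` and `v' t ≥ -α (v t)` on
`[0, T)`, then `v t ≥ 0` for all `t ∈ [0, T)`. -/
theorem scalar_comparison_nonneg
    (α : ℝ → ℝ) (hα_lip : LocallyLipschitz α) (hα_mono : StrictMono α) (hα0 : α 0 = 0)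
    (T : EReal) (hT : 0 < T)
    (v v' : ℝ → ℝ)
    (hderiv : ∀ t : ℝ, 0 ≤ t → (t : EReal) < T →
      HasDerivWithinAt v (v' t) {s : ℝ | 0 ≤ s ∧ (s : EReal) < T} t)
    (hineq : ∀ t : ℝ, 0 ≤ t → (t : EReal) < T → v' t ≥ -α (v t))
    (hv0 : 0 ≤ v 0) :
    ∀ t : ℝ, 0 ≤ t → (t : EReal) < T → 0 ≤ v t := by
  intro t ht htT
  exact scalar_comparison_nonneg_general (fun y hy ↦ hα0 ▸ (hα_mono hy).le)
    (ordConnected_setOf_nonneg_and_coe_lt T) ⟨le_rfl, hT⟩ (fun s hs ↦ hderiv s hs.1 hs.2)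
    (fun s hs ↦ hineq s hs.1 hs.2) hv0 t ⟨ht, htT⟩ ht
end

section
/- Fix p ≥ 1 and use the ℓᵖ-norm ‖·‖ₚ on ℝⁿ. Let 𝒟_C ⊆ ℝⁿ, let γ_dyn > 0 and ε_c > 0, and let Z_dyn^c = {(z¹, u¹), …, (z^{N_c}, u^{N_c})} be a finite set of state-input pairs with zⁱ ∈ ℝⁿ and uⁱ ∈ ℝᵐ such that {z¹, …, z^{N_c}} is an ε_c-net of 𝒟_C. Let h : ℝⁿ → ℝ be twice continuously differentiable, let α : ℝ → ℝ be a locally Lipschitz extended class-K function (strictly increasing with α(0) = 0), let f_c : ℝⁿ → ℝⁿ and g_c : ℝⁿ → ℝ^{n×m} be locally Lipschitz continuous, and define q_c(z, u) := ⟨∇h(z), f_c(z) + g_c(z)u⟩ + α(h(z)). Assume that for each i, the function z ↦ q_c(z, uⁱ) is Lipschitz continuous on the closed ball {z : ‖z − zⁱ‖ₚ ≤ ε_c} with constant L_q^c(zⁱ, uⁱ) > 0, that ε_c ≤ γ_dyn / L_q^c(zⁱ, uⁱ) for all i, and that q_c(zⁱ, uⁱ) ≥ γ_dyn for all i. Then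 for every z ∈ 𝒟_C and every index i with ‖z − zⁱ‖ₚ ≤ ε_c, one has q_c(z, uⁱ) ≥ 0; in particular, for every z ∈ 𝒟_C there exists an input u = uⁱ with ⟨∇h(z), f_c(z) + g_c(z)u⟩ ≥ −α(h(z)). -/
/-- The ℓᵖ-norm on `ℝⁿ` for a real exponent `p ≥ 1`. -/
noncomputable def lpNorm {n : ℕ} (p : ℝ) (z : Fin n → ℝ) : ℝ :=
  (∑ i, |z i| ^ p) ^ (1 / p)

theorem lpNorm_zero {n : ℕ} {p : ℝ} (hp : p ≠ 0) : lpNorm p (0 : Fin n → ℝ) = 0 := by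
  simp only [lpNorm, Pi.zero_apply, abs_zero, Real.zero_rpow hp, Finset.sum_const_zero,
    Real.zero_rpow (one_div_ne_zero hp)]

theorem nonneg_of_abs_sub_le_mul {R : Type*} [Ring R] [LinearOrder R] [IsOrderedRing R]
    {a b L d ε γ : R} (hL : 0 ≤ L) (hab : |a - b| ≤ L * d) (hd : d ≤ ε)
    (hLε : L * ε ≤ γ) (hb : γ ≤ b) : 0 ≤ a :=
  calc
    0 ≤ b - L * ε := sub_nonneg.2 (hLε.trans hb)
    _ ≤ b - L * d := sub_le_sub_left (mul_le_mul_of_nonneg_left hd hL) b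
    _ ≤ a := sub_le_of_abs_sub_le_left hab

theorem prop3_flow_general {E U : Type*} [NormedAddCommGroup E] [NormedSpace ℝ E]
    (ν : E → ℝ) (D : Set E) (γ ε : ℝ) (S : Set (E × U))
    (hnet : ∀ z ∈ D, ∃ zu ∈ S, ν (z - zu.1) ≤ ε)
    (h : E → ℝ) (h' : E → E →L[ℝ] ℝ) (_hh' : ∀ z, HasFDerivAt h (h' z) z)
    (α : ℝ → ℝ) (F : E → U → E)
    (q : E → U → ℝ) (hq : ∀ z u, q z u = h' z (F z u) + α (h z))
    (L : E × U → ℝ) (hLpos : ∀ zu ∈ S, 0 < L zu)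
    (hlip : ∀ zu ∈ S, ∀ z, ν (z - zu.1) ≤ ε →
      |q z zu.2 - q zu.1 zu.2| ≤ L zu * ν (z - zu.1))
    (hεγ : ∀ zu ∈ S, ε ≤ γ / L zu) (hdyn : ∀ zu ∈ S, γ ≤ q zu.1 zu.2) :
    (∀ z ∈ D, ∀ zu ∈ S, ν (z - zu.1) ≤ ε → 0 ≤ q z zu.2) ∧
    (∀ z ∈ D, ∃ u : U, h' z (F z u) ≥ -α (h z)) := by
  have q_nonneg : ∀ z ∈ D, ∀ zu ∈ S, ν (z - zu.1) ≤ ε → 0 ≤ q z zu.2 :=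
    fun z _ zu hzu hz ↦ nonneg_of_abs_sub_le_mul (hLpos zu hzu).le (hlip zu hzu z hz) hz
      ((le_div_iff₀' (hLpos zu hzu)).1 (hεγ zu hzu)) (hdyn zu hzu)
  refine ⟨q_nonneg, fun z hz ↦ ?_⟩
  obtain ⟨zu, hzu, hdist⟩ := hnet z hz
  exact ⟨zu.2, neg_le_iff_add_nonneg.2 (hq z zu.2 ▸ q_nonneg z hz zu hzu hdist)⟩

/-- Flow part of Proposition 3 (prop:2): if the states of the expert data
`Z_dyn^c` form an `ε_c`-net (in the ℓᵖ-norm, `p ≥ 1`) of `𝒟_C`, the function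
`q_c (z, uⁱ) = ⟨∇h z, f_c z + g_c z uⁱ⟩ + α (h z)` is Lipschitz with local
constant `L_q^c (zⁱ, uⁱ)` on the closed `ε_c`-ball around each `zⁱ`,
`ε_c ≤ γ_dyn / L_q^c (zⁱ, uⁱ)`, and `q_c (zⁱ, uⁱ) ≥ γ_dyn`, then
`q_c (z, uⁱ) ≥ 0` for every `z ∈ 𝒟_C` and every data point with
`‖z - zⁱ‖ₚ ≤ ε_c`; in particular the flow HCBF condition holds on `𝒟_C`. -/
theorem prop3_flow {n m : ℕ} (p : ℝ) (hp : 1 ≤ p)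
    (𝒟C : Set (Fin n → ℝ)) (γdyn εc : ℝ) (hγ : 0 < γdyn) (hε : 0 < εc)
    (Zdync : Finset ((Fin n → ℝ) × (Fin m → ℝ)))
    (hnet : ∀ z ∈ 𝒟C, ∃ zu ∈ Zdync, lpNorm p (z - zu.1) ≤ εc)
    (h : (Fin n → ℝ) → ℝ) (hh : ContDiff ℝ 2 h)
    (α : ℝ → ℝ) (hα_lip : LocallyLipschitz α) (hα_mono : StrictMono α) (hα0 : α 0 = 0)
    (fc : (Fin n → ℝ) → (Fin n → ℝ))
    (gc : (Fin n → ℝ) → (Fin n → Fin m → ℝ))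
    (hfc : LocallyLipschitz fc) (hgc : LocallyLipschitz gc)
    (qc : (Fin n → ℝ) → (Fin m → ℝ) → ℝ)
    (hqc : ∀ z u, qc z u =
      fderiv ℝ h z (fc z + fun i => ∑ j, gc z i j * u j) + α (h z))
    (Lqc : (Fin n → ℝ) × (Fin m → ℝ) → ℝ)
    (hLpos : ∀ zu ∈ Zdync, 0 < Lqc zu)
    (hlip : ∀ zu ∈ Zdync, ∀ z z' : Fin n → ℝ,
      lpNorm p (z - zu.1) ≤ εc → lpNorm p (z' - zu.1) ≤ εc →
      |qc z zu.2 - qc z' zu.2| ≤ Lqc zu * lpNorm p (z - z'))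
    (hεγ : ∀ zu ∈ Zdync, εc ≤ γdyn / Lqc zu)
    (hdyn : ∀ zu ∈ Zdync, γdyn ≤ qc zu.1 zu.2) :
    (∀ z ∈ 𝒟C, ∀ zu ∈ Zdync, lpNorm p (z - zu.1) ≤ εc → 0 ≤ qc z zu.2) ∧
    (∀ z ∈ 𝒟C, ∃ u : Fin m → ℝ,
      fderiv ℝ h z (fc z + fun i => ∑ j, gc z i j * u j) ≥ -α (h z)) := by
  have center_mem (z : Fin n → ℝ) : lpNorm p (z - z) ≤ εc := by
    rw [sub_self, lpNorm_zero (zero_lt_one.trans_le hp).ne']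
    exact hε.le
  exact prop3_flow_general (lpNorm p) 𝒟C γdyn εc Zdync hnet h (fderiv ℝ h)
    (fun z ↦ (hh.differentiable two_ne_zero z).hasFDerivAt) α
    (fun z u ↦ fc z + fun i ↦ ∑ j, gc z i j * u j) qc hqc Lqc hLpos
    (fun zu hzu z hz ↦ hlip zu hzu z zu.1 hz (center_mem zu.1)) hεγ hdyn
end

section
/- Fix p ≥ 1 and use the ℓᵖ-norm ‖·‖ₚ on ℝⁿ. Let 𝒟_D ⊆ ℝⁿ, let γ_dyn > 0 and ε_d > 0, and let Z_dyn^d = {(z¹, u¹), …, (z^{N_d}, u^{N_d})} be a finite set of state-input pairs with zⁱ ∈ ℝⁿ and uⁱ ∈ ℝᵐ such that {z¹, …, z^{N_d}} is an ε_d-net of 𝒟_D. Let h : ℝⁿ → ℝ be twice continuously differentiable, let f_d : ℝⁿ → ℝⁿ and g_d : ℝⁿ → ℝ^{n×m} be locally Lipschitz continuous, and define q_d(z, u) := h(f_d(z) + g_d(z)u). Assume that for each i, the function z ↦ q_d(z, uⁱ) is Lipschitz continuous on the closed ball {z : ‖z − zⁱ‖ₚ ≤ ε_d} with constant L_q^d(zⁱ,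 uⁱ) > 0, that ε_d ≤ γ_dyn / L_q^d(zⁱ, uⁱ) for all i, and that q_d(zⁱ, uⁱ) ≥ γ_dyn for all i. Then for every z ∈ 𝒟_D and every index i with ‖z − zⁱ‖ₚ ≤ ε_d, one has q_d(z, uⁱ) ≥ 0; in particular, for every z ∈ 𝒟_D there exists an input u = uⁱ with h(f_d(z) + g_d(z)u) ≥ 0. -/
theorem nonneg_of_sub_le_mul_of_le_div {𝕜 : Type*} [Field 𝕜] [LinearOrder 𝕜]
    [IsStrictOrderedRing 𝕜] {a b r ε γ L : 𝕜} (hL : 0 < L) (hsub : a - b ≤ L * r)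
    (hr : r ≤ ε) (hε : ε ≤ γ / L) (ha : γ ≤ a) : 0 ≤ b := by
  have hdrop : a - b ≤ a := calc
    a - b ≤ L * r := hsub
    _ ≤ L * (γ / L) := by gcongr; exact hr.trans hε
    _ = γ := mul_div_cancel₀ γ hL.ne'
    _ ≤ a := ha
  exact (sub_le_self_iff a).mp hdrop

theorem prop3_jump_general {X U : Type*} (d : X → X → ℝ) (D : Set X) (γ ε : ℝ)
    (Z : Set (X × U)) (hnet : ∀ z ∈ D, ∃ zu ∈ Z, d z zu.1 ≤ ε)
    (q : X → U → ℝ) (L : X × U → ℝ) (hLpos : ∀ zu ∈ Z, 0 < L zu)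
    (hlip : ∀ zu ∈ Z, ∀ z, d z zu.1 ≤ ε → q zu.1 zu.2 - q z zu.2 ≤ L zu * d z zu.1)
    (hεγ : ∀ zu ∈ Z, ε ≤ γ / L zu) (hdyn : ∀ zu ∈ Z, γ ≤ q zu.1 zu.2) :
    (∀ z, ∀ zu ∈ Z, d z zu.1 ≤ ε → 0 ≤ q z zu.2) ∧
    (∀ z ∈ D, ∃ zu ∈ Z, 0 ≤ q z zu.2) := by
  have hball : ∀ z, ∀ zu ∈ Z, d z zu.1 ≤ ε → 0 ≤ q z zu.2 := fun z zu hzu hz =>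
    nonneg_of_sub_le_mul_of_le_div (hLpos zu hzu) (hlip zu hzu z hz) hz (hεγ zu hzu)
      (hdyn zu hzu)
  refine ⟨hball, fun z hz => ?_⟩
  obtain ⟨zu, hzu, hdist⟩ := hnet z hz
  exact ⟨zu, hzu, hball z zu hzu hdist⟩

/-- Jump part of Proposition 3 (prop:2): if the states of the expert data
`Z_dyn^d` form an `ε_d`-net (in the ℓᵖ-norm, `p ≥ 1`) of `𝒟_D`, the function
`q_d (z, uⁱ) = h (f_d z + g_d z uⁱ)` is Lipschitz with local constant
`L_q^d (zⁱ, uⁱ)` on the closed `ε_d`-ball around each `zⁱ`,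
`ε_d ≤ γ_dyn / L_q^d (zⁱ, uⁱ)`, and `q_d (zⁱ, uⁱ) ≥ γ_dyn`, then
`q_d (z, uⁱ) ≥ 0` for every `z ∈ 𝒟_D` and every data point with
`‖z - zⁱ‖ₚ ≤ ε_d`; in particular the jump HCBF condition holds on `𝒟_D`. -/
theorem prop3_jump {n m : ℕ} (p : ℝ) (hp : 1 ≤ p)
    (𝒟D : Set (Fin n → ℝ)) (γdyn εd : ℝ) (hγ : 0 < γdyn) (hε : 0 < εd)
    (Zdynd : Finset ((Fin n → ℝ) × (Fin m → ℝ)))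
    (hnet : ∀ z ∈ 𝒟D, ∃ zu ∈ Zdynd, lpNorm p (z - zu.1) ≤ εd)
    (h : (Fin n → ℝ) → ℝ) (hh : ContDiff ℝ 2 h)
    (fd : (Fin n → ℝ) → (Fin n → ℝ))
    (gd : (Fin n → ℝ) → (Fin n → Fin m → ℝ))
    (hfd : LocallyLipschitz fd) (hgd : LocallyLipschitz gd)
    (qd : (Fin n → ℝ) → (Fin m → ℝ) → ℝ)
    (hqd : ∀ z u, qd z u = h (fd z + fun i => ∑ j, gd z i j * u j))
    (Lqd : (Fin n → ℝ) × (Fin m → ℝ) → ℝ)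
    (hLpos : ∀ zu ∈ Zdynd, 0 < Lqd zu)
    (hlip : ∀ zu ∈ Zdynd, ∀ z z' : Fin n → ℝ,
      lpNorm p (z - zu.1) ≤ εd → lpNorm p (z' - zu.1) ≤ εd →
      |qd z zu.2 - qd z' zu.2| ≤ Lqd zu * lpNorm p (z - z'))
    (hεγ : ∀ zu ∈ Zdynd, εd ≤ γdyn / Lqd zu)
    (hdyn : ∀ zu ∈ Zdynd, γdyn ≤ qd zu.1 zu.2) :
    (∀ z ∈ 𝒟D, ∀ zu ∈ Zdynd, lpNorm p (z - zu.1) ≤ εd → 0 ≤ qd z zu.2) ∧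
    (∀ z ∈ 𝒟D, ∃ u : Fin m → ℝ,
      0 ≤ h (fd z + fun i => ∑ j, gd z i j * u j)) := by
  have hcentre (c : Fin n → ℝ) : lpNorm p (c - c) ≤ εd := by
    rw [sub_self, lpNorm_zero (zero_lt_one.trans_le hp).ne']
    exact hε.le
  obtain ⟨hball, hcover⟩ := prop3_jump_general (fun z c => lpNorm p (z - c)) 𝒟D γdyn εd
    Zdynd hnet qd Lqd hLpos
    (fun zu hzu z hz => (abs_sub_le_iff.mp (hlip zu hzu z zu.1 hz (hcentre zu.1))).2) hεγ hdyn
  exact ⟨fun z _ => hball z,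
    fun z hz => (hcover z hz).imp' Prod.snd fun zu hzu => hqd z zu.2 ▸ hzu.2⟩
end
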